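/- arXiv:math-ph/0008012 — 7 statements merged into one kernel-verified Lean document; each statement's English description precedes it below -/
import Mathlib

section
/- Let H₁ and H₂ be real Hilbert spaces and let i : H₁ → H₂ be a bounded linear operator. Suppose that for each s ∈ (0,1) there is a closed subspace T_s of H₂ with orthogonal projection P_s : H₂ → H₂ onto T_s, and suppose: (1) for every s ∈ (0,1) the composite operator i_s := P_s ∘ i : H₁ → H₂ is compact; (2) there exist a function a : (0,1) → (0,∞) with a(s) → 0 as s → 0 and a constant b > 0 such that ‖i u‖ ≤ a(s)·‖u‖ + b·‖P_s(i u)‖ for every u ∈ H₁ and every s ∈ (0,1). Then i is a compact operator. -/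
/-- If `i : H₁ →L H₂` is a bounded linear operator between real Hilbert
spaces, `P s` is the orthogonal projection onto a closed subspace `T s` of `H₂` for each
`s ∈ (0,1)`, each composite `P s ∘ i` is a compact operator, and
`‖i u‖ ≤ a s * ‖u‖ + b * ‖P s (i u)‖` with `a s → 0` as `s → 0` and `b > 0`,
then `i` is a compact operator. -/
theorem compact_embedding_of_projections
    {H₁ H₂ : Type*}
    [NormedAddCommGroup H₁] [InnerProductSpace ℝ H₁] [CompleteSpace H₁]
    [NormedAddCommGroup H₂] [InnerProductSpace ℝ H₂] [CompleteSpace H₂]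
    (i : H₁ →L[ℝ] H₂)
    (T : ℝ → Submodule ℝ H₂) (P : ℝ → (H₂ →L[ℝ] H₂))
    (hTclosed : ∀ s ∈ Set.Ioo (0 : ℝ) 1, IsClosed (T s : Set H₂))
    (hPmem : ∀ s ∈ Set.Ioo (0 : ℝ) 1, ∀ x : H₂, P s x ∈ T s)
    (hPorth : ∀ s ∈ Set.Ioo (0 : ℝ) 1, ∀ x : H₂, ∀ y ∈ T s,
      inner (𝕜 := ℝ) (x - P s x) y = (0 : ℝ))
    (hcomp : ∀ s ∈ Set.Ioo (0 : ℝ) 1, IsCompactOperator ((P s).comp i))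
    (a : ℝ → ℝ) (hapos : ∀ s ∈ Set.Ioo (0 : ℝ) 1, 0 < a s)
    (ha0 : Filter.Tendsto a (nhdsWithin 0 (Set.Ioo (0 : ℝ) 1)) (nhds 0))
    (b : ℝ) (hb : 0 < b)
    (hineq : ∀ u : H₁, ∀ s ∈ Set.Ioo (0 : ℝ) 1,
      ‖i u‖ ≤ a s * ‖u‖ + b * ‖P s (i u)‖) :
    IsCompactOperator i := by
  refine (isCompactOperator_iff_isCompact_closure_image_ball (𝕜₁ := ℝ)
    (i : H₁ →ₗ[ℝ] H₂) one_pos).2 ?_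
  refine TotallyBounded.isCompact_of_isClosed (TotallyBounded.closure ?_) isClosed_closure
  rw [Metric.totallyBounded_iff]
  intro ε hε
  have hne : (nhdsWithin (0 : ℝ) (Set.Ioo (0 : ℝ) 1)).NeBot := by
    rw [← mem_closure_iff_nhdsWithin_neBot, closure_Ioo (by norm_num)]
    simp
  obtain ⟨s, has, hs⟩ := ((ha0.eventually (gt_mem_nhds (show (0 : ℝ) < ε / 4 by positivity))).and
    self_mem_nhdsWithin).exists
  have htb : TotallyBounded (((P s).comp i) '' Metric.ball 0 1) :=
    ((isCompactOperator_iff_isCompact_closure_image_ball (𝕜₁ := ℝ)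
      (((P s).comp i : H₁ →L[ℝ] H₂) : H₁ →ₗ[ℝ] H₂) one_pos).1 (hcomp s hs)).totallyBounded.subset
      subset_closure
  obtain ⟨t, hts, htf, hcov⟩ := Metric.finite_approx_of_totallyBounded htb (ε / (2 * b))
    (by positivity)
  obtain ⟨t', ht's, ht'f, rfl⟩ := Set.exists_subset_image_finite_and (p := fun x => x = t) |>.1 ⟨t, hts, htf, rfl⟩
  refine ⟨i '' t', ht'f.image _, ?_⟩
  rintro _ ⟨u, hu, rfl⟩
  have h1 := hcov (Set.mem_image_of_mem _ hu)
  simp only [Set.mem_iUnion, Metric.mem_ball, exists_prop, Set.exists_mem_image] at h1 ⊢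
  obtain ⟨v, hv, hd⟩ := h1
  refine ⟨v, hv, ?_⟩
  have hv1 := ht's hv
  rw [mem_ball_zero_iff] at hu hv1
  have h2 := hineq (u - v) s hs
  have h3 : ‖u - v‖ ≤ 2 := (norm_sub_le u v).trans (by linarith)
  rw [dist_eq_norm] at hd
  have h4 : ‖P s (i (u - v))‖ < ε / (2 * b) := by simpa using hd
  have h5 : b * ‖P s (i (u - v))‖ < ε / 2 := by
    calc _ < b * (ε / (2 * b)) := by gcongr
      _ = ε / 2 := by field_simp
  have h6 : a s * ‖u - v‖ ≤ ε / 4 * 2 := by gcongr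
  have h7 : dist (i u) (i v) < ε := by
    rw [dist_eq_norm, ← map_sub]
    linarith
  exact h7
end

section
/- Let h > 0 and let u : ℝ → ℝ be continuously differentiable on the closed interval [−h, h]. Then |‖u‖_{L²((0,h))} − ‖u‖_{L²((−h,0))}| ≤ √2 · h · ‖u′‖_{L²((−h,h))}, i.e. |(∫₀ʰ |u(t)|² dt)^{1/2} − (∫_{−h}⁰ |u(t)|² dt)^{1/2}| ≤ √2 · h · (∫_{−h}ʰ |u′(t)|² dt)^{1/2}. -/
open MeasureTheory in
theorem cs_aux (p q : ℝ) (hpq : p ≤ q) (f g : ℝ → ℝ) (hf : ContinuousOn f (Set.Icc p q))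
    (hg : ContinuousOn g (Set.Icc p q)) :
    (∫ t in p..q, f t * g t) ^ 2 ≤ (∫ t in p..q, f t ^ 2) * (∫ t in p..q, g t ^ 2) := by
  have i1 : IntervalIntegrable (fun t => f t * g t) volume p q :=
    (hf.mul hg).intervalIntegrable_of_Icc hpq
  have i2 : IntervalIntegrable (fun t => f t ^ 2) volume p q :=
    (hf.pow 2).intervalIntegrable_of_Icc hpq
  have i3 : IntervalIntegrable (fun t => g t ^ 2) volume p q :=
    (hg.pow 2).intervalIntegrable_of_Icc hpq
  have key : ∀ x : ℝ, 0 ≤ (∫ t in p..q, g t ^ 2) * (x * x)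
      + (-2 * ∫ t in p..q, f t * g t) * x + ∫ t in p..q, f t ^ 2 := by
    intro x
    have h0 : 0 ≤ ∫ t in p..q, (f t - x * g t) ^ 2 :=
      intervalIntegral.integral_nonneg hpq (fun t _ => sq_nonneg _)
    have h1 : ∫ t in p..q, (f t - x * g t) ^ 2 =
        ∫ t in p..q, ((f t ^ 2 - (2 * x) * (f t * g t)) + x ^ 2 * g t ^ 2) := by
      congr 1; ext t; ring
    rw [h1, intervalIntegral.integral_add (i2.sub (i1.const_mul _)) (i3.const_mul _),
      intervalIntegral.integral_sub i2 (i1.const_mul _), intervalIntegral.integral_const_mul,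
      intervalIntegral.integral_const_mul] at h0
    linarith
  have := discrim_le_zero key
  unfold discrim at this
  nlinarith

open MeasureTheory in
theorem mink_aux (p q : ℝ) (hpq : p ≤ q) (f g : ℝ → ℝ) (hf : ContinuousOn f (Set.Icc p q))
    (hg : ContinuousOn g (Set.Icc p q)) :
    (Real.sqrt (∫ t in p..q, f t ^ 2) - Real.sqrt (∫ t in p..q, g t ^ 2)) ^ 2 ≤
      ∫ t in p..q, (f t - g t) ^ 2 := by
  have i1 : IntervalIntegrable (fun t => f t * g t) volume p q :=
    (hf.mul hg).intervalIntegrable_of_Icc hpq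
  have i2 : IntervalIntegrable (fun t => f t ^ 2) volume p q :=
    (hf.pow 2).intervalIntegrable_of_Icc hpq
  have i3 : IntervalIntegrable (fun t => g t ^ 2) volume p q :=
    (hg.pow 2).intervalIntegrable_of_Icc hpq
  have hA : 0 ≤ ∫ t in p..q, f t ^ 2 :=
    intervalIntegral.integral_nonneg hpq (fun t _ => sq_nonneg _)
  have hB : 0 ≤ ∫ t in p..q, g t ^ 2 :=
    intervalIntegral.integral_nonneg hpq (fun t _ => sq_nonneg _)
  have h1 : ∫ t in p..q, (f t - g t) ^ 2 =
      ∫ t in p..q, ((f t ^ 2 - 2 * (f t * g t)) + g t ^ 2) := by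
    congr 1; ext t; ring
  rw [h1, intervalIntegral.integral_add (i2.sub (i1.const_mul _)) i3,
    intervalIntegral.integral_sub i2 (i1.const_mul _), intervalIntegral.integral_const_mul]
  have hc := Real.le_sqrt_of_sq_le (cs_aux p q hpq f g hf hg)
  rw [Real.sqrt_mul hA] at hc
  have := Real.sq_sqrt hA
  have := Real.sq_sqrt hB
  nlinarith

/-- one-dimensional inequality
`|‖u‖_{L²((0,h))} − ‖u‖_{L²((−h,0))}| ≤ √2 · h · ‖u′‖_{L²((−h,h))}`
for `u` continuously differentiable on `[−h, h]`. -/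
theorem abs_sub_L2_norms_le
    (h : ℝ) (hh : 0 < h) (u u' : ℝ → ℝ)
    (hderiv : ∀ t ∈ Set.Icc (-h) h, HasDerivAt u (u' t) t)
    (hcont : ContinuousOn u' (Set.Icc (-h) h)) :
    |Real.sqrt (∫ t in (0 : ℝ)..h, (u t) ^ 2) -
        Real.sqrt (∫ t in (-h)..(0 : ℝ), (u t) ^ 2)| ≤
      Real.sqrt 2 * h * Real.sqrt (∫ t in (-h)..h, (u' t) ^ 2) := by
  have hu : ContinuousOn u (Set.Icc (-h) h) :=
    fun t ht => (hderiv t ht).continuousAt.continuousWithinAt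
  have hf : ContinuousOn u (Set.Icc 0 h) :=
    hu.mono (Set.Icc_subset_Icc (by linarith) le_rfl)
  have hg : ContinuousOn (fun t => u (t - h)) (Set.Icc 0 h) := by
    refine hu.comp (by fun_prop) ?_
    intro t ht
    constructor <;> linarith [ht.1, ht.2]
  have hs : ∫ t in (-h)..(0 : ℝ), (u t) ^ 2 = ∫ t in (0 : ℝ)..h, (u (t - h)) ^ 2 := by
    rw [intervalIntegral.integral_comp_sub_right (fun t => u t ^ 2) h]
    simp
  have hD : 0 ≤ ∫ t in (-h)..h, (u' t) ^ 2 :=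
    intervalIntegral.integral_nonneg (by linarith) (fun t _ => sq_nonneg _)
  have hm := mink_aux 0 h hh.le u (fun t => u (t - h)) hf hg
  have hpt : ∀ t ∈ Set.Icc 0 h, (u t - u (t - h)) ^ 2 ≤ h * ∫ t in (-h)..h, (u' t) ^ 2 := by
    intro t ht
    have hle : t - h ≤ t := by linarith
    have hsub : Set.Icc (t - h) t ⊆ Set.Icc (-h) h :=
      Set.Icc_subset_Icc (by linarith [ht.1]) ht.2
    have hc' := hcont.mono hsub
    have hftc : ∫ s in (t - h)..t, u' s = u t - u (t - h) := by
      apply intervalIntegral.integral_eq_sub_of_hasDerivAt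
      · intro x hx
        rw [Set.uIcc_of_le hle] at hx
        exact hderiv x (hsub hx)
      · exact hc'.intervalIntegrable_of_Icc hle
    have hcs := cs_aux (t - h) t hle u' (fun _ => 1) hc' continuousOn_const
    simp only [mul_one, one_pow, intervalIntegral.integral_const, smul_eq_mul] at hcs
    rw [hftc] at hcs
    have hmono : ∫ s in (t - h)..t, u' s ^ 2 ≤ ∫ s in (-h)..h, u' s ^ 2 := by
      apply intervalIntegral.integral_mono_interval (by linarith [ht.1]) hle ht.2
      · exact Filter.Eventually.of_forall (fun x => sq_nonneg _)
      · exact (hcont.pow 2).intervalIntegrable_of_Icc (by linarith)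
    nlinarith
  have hint : ∫ t in (0 : ℝ)..h, (u t - u (t - h)) ^ 2 ≤
      ∫ t in (0 : ℝ)..h, h * ∫ t in (-h)..h, (u' t) ^ 2 := by
    apply intervalIntegral.integral_mono_on hh.le _ _ hpt
    · exact ((hf.sub hg).pow 2).intervalIntegrable_of_Icc hh.le
    · exact intervalIntegrable_const
  rw [intervalIntegral.integral_const, smul_eq_mul, sub_zero] at hint
  rw [hs]
  refine abs_le_of_sq_le_sq ?_ (by positivity)
  rw [mul_pow, mul_pow, Real.sq_sqrt hD, Real.sq_sqrt (by norm_num)]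
  nlinarith [mul_nonneg (sq_nonneg h) hD]
end

section
/- Let h > 0 and let u : ℝ → ℝ be continuously differentiable on the closed interval [−h, h]. Then ∫₀ʰ |u(t)|² dt ≤ 2 ∫_{−h}⁰ |u(t)|² dt + 4h² ∫_{−h}ʰ |u′(t)|² dt, and symmetrically ∫_{−h}⁰ |u(t)|² dt ≤ 2 ∫₀ʰ |u(t)|² dt + 4h² ∫_{−h}ʰ |u′(t)|² dt. -/
open MeasureTheory in
theorem aux_diff_sq
    (h : ℝ) (hh : 0 < h) (u u' : ℝ → ℝ)
    (hderiv : ∀ t ∈ Set.Icc (-h) h, HasDerivAt u (u' t) t)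
    (hcont : ContinuousOn u' (Set.Icc (-h) h)) (t : ℝ) (ht : t ∈ Set.Icc 0 h) :
    (u t - u (-t)) ^ 2 ≤ 2 * h * ∫ t in (-h)..h, (u' t) ^ 2 := by
  obtain ⟨h0, h1⟩ := ht
  have hsub : Set.uIcc (-t) t ⊆ Set.Icc (-h) h := by
    rw [Set.uIcc_of_le (by linarith)]
    exact Set.Icc_subset_Icc (by linarith) h1
  have hi : IntervalIntegrable u' volume (-t) t := (hcont.mono hsub).intervalIntegrable
  have hi2 : IntervalIntegrable (fun s => u' s ^ 2) volume (-t) t :=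
    ((hcont.mono hsub).pow 2).intervalIntegrable
  have hi3 : IntervalIntegrable (fun s => u' s ^ 2) volume (-h) h := by
    apply ContinuousOn.intervalIntegrable
    rw [Set.uIcc_of_le (by linarith)]
    exact hcont.pow 2
  have hD : ∫ s in (-t)..t, u' s = u t - u (-t) :=
    intervalIntegral.integral_eq_sub_of_hasDerivAt (fun x hx => hderiv x (hsub hx)) hi
  have hmono : ∫ s in (-t)..t, u' s ^ 2 ≤ ∫ s in (-h)..h, u' s ^ 2 :=
    intervalIntegral.integral_mono_interval (by linarith) (by linarith) h1
      (Filter.Eventually.of_forall fun s => sq_nonneg _) hi3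
  set D := u t - u (-t) with hDdef
  set c := D / (2 * h) with hc
  have hpos : 0 ≤ ∫ s in (-t)..t, (u' s ^ 2 - 2 * c * u' s + c ^ 2) :=
    intervalIntegral.integral_nonneg (by linarith)
      (fun s _ => by nlinarith [sq_nonneg (u' s - c)])
  rw [intervalIntegral.integral_add (hi2.sub (hi.const_mul _)) intervalIntegrable_const,
    intervalIntegral.integral_sub hi2 (hi.const_mul _), intervalIntegral.integral_const_mul,
    hD, intervalIntegral.integral_const, smul_eq_mul] at hpos
  have hDc : D = c * (2 * h) := by rw [hc]; field_simp
  have h2 : (t - -t) * c ^ 2 ≤ 2 * h * c ^ 2 := by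
    apply mul_le_mul_of_nonneg_right _ (sq_nonneg c); linarith
  have h3 : c * D ≤ ∫ s in (-h)..h, u' s ^ 2 := by
    have : c * D = 2 * h * c ^ 2 := by rw [hDc]; ring
    linarith
  calc D ^ 2 = 2 * h * (c * D) := by rw [sq]; nth_rewrite 1 [hDc]; ring
    _ ≤ _ := mul_le_mul_of_nonneg_left h3 (by linarith)

/-- for `u` continuously differentiable on `[−h, h]`,
`∫₀ʰ u² ≤ 2 ∫_{−h}⁰ u² + 4h² ∫_{−h}ʰ u′²` and symmetrically. -/
theorem sq_integral_half_le
    (h : ℝ) (hh : 0 < h) (u u' : ℝ → ℝ)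
    (hderiv : ∀ t ∈ Set.Icc (-h) h, HasDerivAt u (u' t) t)
    (hcont : ContinuousOn u' (Set.Icc (-h) h)) :
    (∫ t in (0 : ℝ)..h, (u t) ^ 2) ≤
        2 * (∫ t in (-h)..(0 : ℝ), (u t) ^ 2) + 4 * h ^ 2 * ∫ t in (-h)..h, (u' t) ^ 2 ∧
      (∫ t in (-h)..(0 : ℝ), (u t) ^ 2) ≤
        2 * (∫ t in (0 : ℝ)..h, (u t) ^ 2) + 4 * h ^ 2 * ∫ t in (-h)..h, (u' t) ^ 2 := by
  have key := aux_diff_sq h hh u u' hderiv hcont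
  set E := ∫ t in (-h)..h, (u' t) ^ 2 with hE
  have hu : ContinuousOn u (Set.Icc (-h) h) :=
    fun x hx => (hderiv x hx).continuousAt.continuousWithinAt
  have hi1 : IntervalIntegrable (fun s => u s ^ 2) MeasureTheory.volume 0 h := by
    apply ContinuousOn.intervalIntegrable
    rw [Set.uIcc_of_le hh.le]
    exact (hu.mono (Set.Icc_subset_Icc (by linarith) le_rfl)).pow 2
  have hi2 : IntervalIntegrable (fun s => u (-s) ^ 2) MeasureTheory.volume 0 h := by
    apply ContinuousOn.intervalIntegrable
    rw [Set.uIcc_of_le hh.le]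
    refine (hu.comp continuous_neg.continuousOn ?_).pow 2
    intro x hx
    exact ⟨by linarith [hx.2], by linarith [hx.1]⟩
  have hrefl : ∫ t in (-h)..(0 : ℝ), u t ^ 2 = ∫ t in (0 : ℝ)..h, u (-t) ^ 2 := by
    have := intervalIntegral.integral_comp_neg (a := 0) (b := h) (fun t => u t ^ 2)
    rw [this, neg_zero]
  have gen : ∀ f g : ℝ → ℝ, IntervalIntegrable f MeasureTheory.volume 0 h →
      IntervalIntegrable g MeasureTheory.volume 0 h →
      (∀ t ∈ Set.Icc 0 h, f t ≤ 2 * g t + 4 * h * E) →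
      ∫ t in (0 : ℝ)..h, f t ≤ 2 * (∫ t in (0 : ℝ)..h, g t) + 4 * h ^ 2 * E := by
    intro f g hf hg hfg
    have := intervalIntegral.integral_mono_on hh.le hf
      ((hg.const_mul 2).add intervalIntegrable_const) hfg
    rw [intervalIntegral.integral_add (hg.const_mul 2) intervalIntegrable_const,
      intervalIntegral.integral_const_mul, intervalIntegral.integral_const, smul_eq_mul] at this
    calc _ ≤ _ := this
      _ = _ := by ring
  rw [hrefl]
  constructor
  · exact gen _ _ hi1 hi2 fun t ht => by
      nlinarith [key t ht, sq_nonneg (u t - 2 * u (-t))]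
  · exact gen _ _ hi2 hi1 fun t ht => by
      nlinarith [key t ht, sq_nonneg (u (-t) - 2 * u t)]
end

section
/- Let a < b be real numbers, let 0 < h < (b − a)/4, and let u : ℝ → ℝ be continuously differentiable on the closed interval [a, b]. Then ∫_a^b |u(t)|² dt ≤ 3 ∫_{a+h}^{b−h} |u(t)|² dt + 4h² ∫_a^b |u′(t)|² dt. -/
/-- Cauchy–Schwarz for increments of `u`. -/
lemma sq_sub_le_aux (a b h s : ℝ) (hh : 0 < h) (has : a ≤ s) (hsb : s + h ≤ b)
    (u u' : ℝ → ℝ)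
    (hderiv : ∀ t ∈ Set.Icc a b, HasDerivAt u (u' t) t)
    (hcont : ContinuousOn u' (Set.Icc a b)) :
    (u (s + h) - u s) ^ 2 ≤ h * ∫ t in a..b, (u' t) ^ 2 := by
  have hsub : Set.uIcc s (s + h) ⊆ Set.Icc a b := by
    rw [Set.uIcc_of_le (by linarith)]
    exact Set.Icc_subset_Icc has hsb
  have hab : a ≤ b := by linarith
  have hc : ContinuousOn u' (Set.uIcc s (s + h)) := hcont.mono hsub
  have h1 : ∫ t in s..(s + h), u' t = u (s + h) - u s :=
    intervalIntegral.integral_eq_sub_of_hasDerivAt (fun x hx => hderiv x (hsub hx))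
      hc.intervalIntegrable
  have h2 : (∫ t in s..(s + h), (u' t) ^ 2) ≤ ∫ t in a..b, (u' t) ^ 2 := by
    apply intervalIntegral.integral_mono_interval has (by linarith) hsb
    · exact Filter.Eventually.of_forall fun x => sq_nonneg _
    · apply ContinuousOn.intervalIntegrable
      rw [Set.uIcc_of_le hab]
      exact hcont.pow 2
  set D := u (s + h) - u s with hD
  set c := D / h with hcdef
  have i1 : IntervalIntegrable (fun t => (u' t) ^ 2) MeasureTheory.volume s (s + h) :=
    (hc.pow 2).intervalIntegrable
  have i2 : IntervalIntegrable (fun t => 2 * c * u' t) MeasureTheory.volume s (s + h) :=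
    (hc.intervalIntegrable).const_mul _
  have h3 : 0 ≤ ∫ t in s..(s + h), ((u' t) ^ 2 - 2 * c * u' t + c ^ 2) := by
    apply intervalIntegral.integral_nonneg (by linarith)
    intro x _
    nlinarith [sq_nonneg (u' x - c)]
  rw [intervalIntegral.integral_add (i1.sub i2) intervalIntegrable_const,
    intervalIntegral.integral_sub i1 i2, intervalIntegral.integral_const_mul, h1,
    intervalIntegral.integral_const, smul_eq_mul] at h3
  have hch : c * h = D := by rw [hcdef]; field_simp
  have h4 : 0 ≤ (∫ t in s..(s + h), (u' t) ^ 2) - c * D := by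
    have : (s + h - s) * c ^ 2 = c * D := by rw [← hch]; ring
    rw [this] at h3; linarith
  have h5 : D ^ 2 = h * (c * D) := by linear_combination (-D) * hch
  rw [h5]
  exact mul_le_mul_of_nonneg_left (by linarith) hh.le

/-- for `a < b`, `0 < h < (b−a)/4` and `u` continuously differentiable
on `[a, b]`, `∫_a^b u² ≤ 3 ∫_{a+h}^{b−h} u² + 4h² ∫_a^b u′²`. -/
theorem sq_integral_le_of_interior
    (a b h : ℝ) (hab : a < b) (hh : 0 < h) (hh4 : h < (b - a) / 4)
    (u u' : ℝ → ℝ)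
    (hderiv : ∀ t ∈ Set.Icc a b, HasDerivAt u (u' t) t)
    (hcont : ContinuousOn u' (Set.Icc a b)) :
    (∫ t in a..b, (u t) ^ 2) ≤
      3 * (∫ t in (a + h)..(b - h), (u t) ^ 2) + 4 * h ^ 2 * ∫ t in a..b, (u' t) ^ 2 := by
  have key := fun s (h1 : a ≤ s) (h2 : s + h ≤ b) =>
    sq_sub_le_aux a b h s hh h1 h2 u u' hderiv hcont
  set E := ∫ t in a..b, (u' t) ^ 2 with hE
  have huc : ContinuousOn u (Set.Icc a b) := fun x hx =>
    (hderiv x hx).continuousAt.continuousWithinAt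
  have hi : ∀ p q, a ≤ p → p ≤ q → q ≤ b →
      IntervalIntegrable (fun t => (u t) ^ 2) MeasureTheory.volume p q := by
    intro p q hp hpq hq
    apply ContinuousOn.intervalIntegrable
    rw [Set.uIcc_of_le hpq]
    exact (huc.mono (Set.Icc_subset_Icc hp hq)).pow 2
  have A : (∫ t in a..(a + h), (u t) ^ 2) ≤
      2 * (∫ t in (a + h)..(a + h + h), (u t) ^ 2) + 2 * h ^ 2 * E := by
    have ii : IntervalIntegrable (fun t => (u (t + h)) ^ 2) MeasureTheory.volume a (a + h) := by
      have := (hi (a + h) (a + h + h) (by linarith) (by linarith) (by linarith)).comp_add_right h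
      simpa using this
    have m : (∫ t in a..(a + h), (u t) ^ 2) ≤
        ∫ t in a..(a + h), (2 * (u (t + h)) ^ 2 + 2 * h * E) := by
      apply intervalIntegral.integral_mono_on (by linarith)
        (hi _ _ le_rfl (by linarith) (by linarith))
        ((ii.const_mul 2).add intervalIntegrable_const)
      intro x hx
      have := key x hx.1 (by linarith [hx.2])
      nlinarith [sq_nonneg (u x - 2 * u (x + h))]
    rw [intervalIntegral.integral_add (ii.const_mul 2) intervalIntegrable_const,
      intervalIntegral.integral_const_mul, intervalIntegral.integral_const, smul_eq_mul,
      intervalIntegral.integral_comp_add_right (fun t => (u t) ^ 2) h] at m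
    linarith
  have B : (∫ t in (b - h)..b, (u t) ^ 2) ≤
      2 * (∫ t in (b - h - h)..(b - h), (u t) ^ 2) + 2 * h ^ 2 * E := by
    have ii : IntervalIntegrable (fun t => (u (t - h)) ^ 2) MeasureTheory.volume (b - h) b := by
      have := (hi (b - h - h) (b - h) (by linarith) (by linarith) (by linarith)).comp_sub_right h
      simpa using this
    have m : (∫ t in (b - h)..b, (u t) ^ 2) ≤
        ∫ t in (b - h)..b, (2 * (u (t - h)) ^ 2 + 2 * h * E) := by
      apply intervalIntegral.integral_mono_on (by linarith)
        (hi _ _ (by linarith) (by linarith) le_rfl)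
        ((ii.const_mul 2).add intervalIntegrable_const)
      intro x hx
      have := key (x - h) (by linarith [hx.1]) (by linarith [hx.2])
      rw [sub_add_cancel] at this
      nlinarith [sq_nonneg (u x - 2 * u (x - h))]
    rw [intervalIntegral.integral_add (ii.const_mul 2) intervalIntegrable_const,
      intervalIntegral.integral_const_mul, intervalIntegral.integral_const, smul_eq_mul,
      intervalIntegral.integral_comp_sub_right (fun t => (u t) ^ 2) h] at m
    linarith
  have s1 := intervalIntegral.integral_add_adjacent_intervals
    (hi a (a + h) le_rfl (by linarith) (by linarith))
    (hi (a + h) b (by linarith) (by linarith) le_rfl)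
  have s2 := intervalIntegral.integral_add_adjacent_intervals
    (hi (a + h) (b - h) (by linarith) (by linarith) (by linarith))
    (hi (b - h) b (by linarith) (by linarith) le_rfl)
  have s3 := intervalIntegral.integral_add_adjacent_intervals
    (hi (a + h) (a + h + h) (by linarith) (by linarith) (by linarith))
    (hi (a + h + h) (b - h) (by linarith) (by linarith) (by linarith))
  have s4 := intervalIntegral.integral_add_adjacent_intervals
    (hi (a + h + h) (b - h - h) (by linarith) (by linarith) (by linarith))
    (hi (b - h - h) (b - h) (by linarith) (by linarith) (by linarith))
  have s5 : 0 ≤ ∫ t in (a + h + h)..(b - h - h), (u t) ^ 2 :=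
    intervalIntegral.integral_nonneg (by linarith) fun x _ => sq_nonneg _
  linarith
end

section
/- Let H₁, H₂, H₃ be real Hilbert spaces, let i : H₁ → H₂ and k : H₂ → H₃ be bounded linear operators with ‖i u‖ ≤ ‖u‖ for all u ∈ H₁ and ‖k v‖ ≤ ‖v‖ for all v ∈ H₂. Suppose: (1) the composite j := k ∘ i : H₁ → H₃ is a compact operator; (2) for every ε ∈ (0, ε₀) (for some ε₀ > 0) there exists c(ε) > 0 with ‖i u‖ ≤ ε ‖u‖ + c(ε) ‖k(i u)‖ for all u ∈ H₁. Then i : H₁ → H₂ is a compact operator. -/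
/-- sufficiency: if `i : H₁ → H₂` and `k : H₂ → H₃` are bounded linear
operators between real Hilbert spaces with `‖i u‖ ≤ ‖u‖`, `‖k v‖ ≤ ‖v‖`, the composite
`j = k ∘ i` is compact, and for every `ε ∈ (0, ε₀)` there is `c(ε) > 0` with
`‖i u‖ ≤ ε ‖u‖ + c(ε) ‖k (i u)‖` for all `u`, then `i` is compact. -/
theorem compact_of_interpolation_ineq
    {H₁ H₂ H₃ : Type*}
    [NormedAddCommGroup H₁] [InnerProductSpace ℝ H₁] [CompleteSpace H₁]
    [NormedAddCommGroup H₂] [InnerProductSpace ℝ H₂] [CompleteSpace H₂]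
    [NormedAddCommGroup H₃] [InnerProductSpace ℝ H₃] [CompleteSpace H₃]
    (i : H₁ →L[ℝ] H₂) (k : H₂ →L[ℝ] H₃)
    (hi_norm : ∀ u : H₁, ‖i u‖ ≤ ‖u‖) (hk_norm : ∀ v : H₂, ‖k v‖ ≤ ‖v‖)
    (hj_cpt : IsCompactOperator (k.comp i))
    (ε₀ : ℝ) (hε₀ : 0 < ε₀)
    (hineq : ∀ ε ∈ Set.Ioo (0 : ℝ) ε₀, ∃ c > (0 : ℝ),
      ∀ u : H₁, ‖i u‖ ≤ ε * ‖u‖ + c * ‖k (i u)‖) :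
    IsCompactOperator i := by
  refine (isCompactOperator_iff_isCompact_closure_image_ball (𝕜₁ := ℝ)
    (i : H₁ →ₗ[ℝ] H₂) one_pos).2 ?_
  have hj : TotallyBounded ((k.comp i) '' Metric.ball (0 : H₁) 1) :=
    (IsCompactOperator.isCompact_closure_image_ball (𝕜₁ := ℝ)
      (f := ((k.comp i : H₁ →L[ℝ] H₃) : H₁ →ₗ[ℝ] H₃)) hj_cpt 1).totallyBounded.subset
      subset_closure
  have hi : TotallyBounded (i '' Metric.ball (0 : H₁) 1) := by
    rw [Metric.totallyBounded_iff]
    intro e he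
    obtain ⟨c, hc, hle⟩ := hineq (min (e / 4) (ε₀ / 2))
      ⟨by positivity, (min_le_right _ _).trans_lt (by linarith)⟩
    obtain ⟨t, hts, htf, hcov⟩ := Metric.finite_approx_of_totallyBounded hj (e / (2 * c))
      (by positivity)
    obtain ⟨p, hps, hpf, rfl⟩ := Set.exists_subset_image_finite_and.1 ⟨t, hts, htf, rfl⟩
    refine ⟨i '' p, (Set.Finite.image _ ?_), ?_⟩
    · assumption
    rintro _ ⟨u, hu, rfl⟩
    have h1 := hcov ⟨u, hu, rfl⟩
    simp only [Set.mem_iUnion, exists_prop, Set.exists_mem_image] at h1 ⊢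
    obtain ⟨w, hw, hd⟩ := h1
    refine ⟨w, hw, ?_⟩
    have hwb := hps hw
    rw [mem_ball_zero_iff] at hu hwb
    rw [mem_ball_iff_norm] at hd ⊢
    have h2 := hle (u - w)
    simp only [map_sub, ContinuousLinearMap.comp_apply] at h2 hd
    have h3 : ‖u - w‖ ≤ 2 := (norm_sub_le _ _).trans (by linarith)
    have h4 : min (e / 4) (ε₀ / 2) * ‖u - w‖ ≤ e / 4 * 2 :=
      mul_le_mul (min_le_left _ _) h3 (norm_nonneg _) (by positivity)
    have h5 : c * ‖k (i u) - k (i w)‖ < e / 2 := by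
      rw [lt_div_iff₀ (by positivity)] at hd
      linarith
    linarith
  exact hi.closure.isCompact_of_isClosed isClosed_closure
end

section
/- Let U, V ⊆ ℝⁿ and let φ : U → V be a Q-quasiisometrical homeomorphism with Q ≥ 1. If φ is differentiable at a point x ∈ U with (total) derivative Dφ(x) : ℝⁿ → ℝⁿ, then every singular value of Dφ(x) lies in the interval [Q⁻¹, Q]; consequently ‖Dφ(x)‖² ≤ Q^{n+2} · |det Dφ(x)|, where ‖·‖ denotes the operator norm. In particular, a quasiisometrical homeomorphism satisfies the 2-quasi-conformality inequality ‖φ′(x)‖² ≤ K |det φ′(x)| at every point of differentiability, with K = Q^{n+2}. -/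
/-- The `Q`-quasiisometry estimate on `U`: around every point of `U` there is a ball
contained in `U` on which `φ` is bi-Lipschitz with constants `Q⁻¹` and `Q`. -/
def QIEstimateOn {n : ℕ} (Q : ℝ) (U : Set (EuclideanSpace ℝ (Fin n)))
    (φ : EuclideanSpace ℝ (Fin n) → EuclideanSpace ℝ (Fin n)) : Prop :=
  ∀ x ∈ U, ∃ r > (0 : ℝ), Metric.ball x r ⊆ U ∧
    ∀ y ∈ Metric.ball x r, ∀ z ∈ Metric.ball x r,
      Q⁻¹ * ‖y - z‖ ≤ ‖φ y - φ z‖ ∧ ‖φ y - φ z‖ ≤ Q * ‖y - z‖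

/-- `φ` is a `Q`-quasiisometrical homeomorphism from `U` onto `V`: a homeomorphism
of `U` onto `V` satisfying the `Q`-quasiisometry estimate. -/
def IsQuasiIsometricHomeo {n : ℕ} (Q : ℝ) (U V : Set (EuclideanSpace ℝ (Fin n)))
    (φ : EuclideanSpace ℝ (Fin n) → EuclideanSpace ℝ (Fin n)) : Prop :=
  Set.BijOn φ U V ∧ ContinuousOn φ U ∧
    ContinuousOn (Function.invFunOn φ U) V ∧ QIEstimateOn Q U φ

/-- `σ` is a singular value of the linear operator `A` on a Euclidean space if
`σ ≥ 0` and `σ²` is an eigenvalue of `A*A`. -/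
def IsSingularValue {n : ℕ}
    (A : EuclideanSpace ℝ (Fin n) →L[ℝ] EuclideanSpace ℝ (Fin n)) (σ : ℝ) : Prop :=
  0 ≤ σ ∧ ∃ v : EuclideanSpace ℝ (Fin n), v ≠ 0 ∧
    ContinuousLinearMap.adjoint A (A v) = (σ ^ 2) • v

/-- if `φ : U → V` is a `Q`-quasiisometrical homeomorphism (`Q ≥ 1`)
differentiable at `x ∈ U` with derivative `A = Dφ(x)`, then every singular value of `A`
lies in `[Q⁻¹, Q]`, and consequently `‖A‖² ≤ Q^{n+2} · |det A|`; i.e. quasiisometries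
are 2-quasi-conformal with `K = Q^{n+2}`. -/
theorem quasiIsometry_deriv_singularValues
    {n : ℕ} (Q : ℝ) (hQ : 1 ≤ Q)
    (U V : Set (EuclideanSpace ℝ (Fin n))) (hUopen : IsOpen U) (hVopen : IsOpen V)
    (φ : EuclideanSpace ℝ (Fin n) → EuclideanSpace ℝ (Fin n))
    (hφ : IsQuasiIsometricHomeo Q U V φ)
    (x : EuclideanSpace ℝ (Fin n)) (hx : x ∈ U)
    (A : EuclideanSpace ℝ (Fin n) →L[ℝ] EuclideanSpace ℝ (Fin n))
    (hA : HasFDerivAt φ A x) :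
    (∀ σ : ℝ, IsSingularValue A σ → σ ∈ Set.Icc Q⁻¹ Q) ∧
    ‖A‖ ^ 2 ≤ Q ^ (n + 2) * |A.det| := by
  have hQ0 : 0 < Q := by linarith
  obtain ⟨r, hr, -, hb⟩ := hφ.2.2.2 x hx
  have hmem : Metric.ball x r ∈ nhds x := Metric.ball_mem_nhds x hr
  have hxr : x ∈ Metric.ball x r := Metric.mem_ball_self hr
  have hup : ‖A‖ ≤ Q := by
    refine hA.le_of_lip' hQ0.le ?_
    filter_upwards [hmem] with y hy using (hb y hy x hxr).2
  have hlow : ∀ v, Q⁻¹ * ‖v‖ ≤ ‖A v‖ := by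
    intro v
    have h1 := (hA.hasLineDerivAt v).tendsto_slope_zero.norm
    refine ge_of_tendsto h1 ?_
    have hc : Filter.Tendsto (fun t : ℝ => x + t • v) (nhdsWithin 0 {0}ᶜ) (nhds x) := by
      have : Continuous (fun t : ℝ => x + t • v) := by fun_prop
      have h2 := this.tendsto 0
      simp only [zero_smul, add_zero] at h2
      exact h2.mono_left nhdsWithin_le_nhds
    filter_upwards [hc hmem, self_mem_nhdsWithin] with t ht ht0
    have h3 := (hb _ ht x hxr).1
    have ht1 : 0 < |t| := abs_pos.mpr ht0
    rw [add_sub_cancel_left, norm_smul, Real.norm_eq_abs] at h3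
    rw [norm_smul, norm_inv, Real.norm_eq_abs, le_inv_mul_iff₀ ht1]
    linarith
  have hsv : ∀ σ : ℝ, IsSingularValue A σ → σ ∈ Set.Icc Q⁻¹ Q := by
    rintro σ ⟨hσ, v, hv, hAv⟩
    have hv0 : 0 < ‖v‖ := norm_pos_iff.mpr hv
    have h1 : ‖A v‖ ^ 2 = (σ * ‖v‖) ^ 2 := by
      rw [← real_inner_self_eq_norm_sq, ← ContinuousLinearMap.adjoint_inner_left, hAv,
        real_inner_smul_left, real_inner_self_eq_norm_sq]
      ring
    have h2 : ‖A v‖ = σ * ‖v‖ :=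
      (sq_eq_sq₀ (norm_nonneg _) (by positivity)).mp h1
    refine ⟨?_, ?_⟩
    · exact le_of_mul_le_mul_right (h2 ▸ hlow v) hv0
    · exact le_of_mul_le_mul_right (h2 ▸ A.le_of_opNorm_le hup v) hv0
  refine ⟨hsv, ?_⟩
  have hdet : (Q⁻¹) ^ n ≤ |A.det| := by
    have h1 : |A.det| = ∏ i ∈ Finset.range n, A.toLinearMap.singularValues i := by
      have h2 := A.toLinearMap.normDet_eq_prod_singularValues
      rw [LinearMap.normDet_eq_abs_det, finrank_euclideanSpace_fin] at h2
      exact h2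
    rw [h1]
    calc (Q⁻¹) ^ n = ∏ i ∈ Finset.range n, Q⁻¹ := by simp
      _ ≤ _ := by
        refine Finset.prod_le_prod (fun _ _ => by positivity) fun i hi => ?_
        refine (hsv _ ⟨A.toLinearMap.singularValues_nonneg i, ?_⟩).1
        have hi' : i < Module.finrank ℝ (EuclideanSpace ℝ (Fin n)) := by
          simpa using hi
        obtain ⟨v, hv⟩ :=
          (A.toLinearMap.hasEigenvalue_adjoint_comp_self_sq_singularValues hi').exists_hasEigenvector
        exact ⟨v, hv.2, hv.apply_eq_smul⟩
  calc ‖A‖ ^ 2 ≤ Q ^ 2 := by gcongr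
    _ = Q ^ (n + 2) * (Q⁻¹) ^ n := by
      rw [inv_pow, pow_add]; field_simp
    _ ≤ _ := by gcongr
end

section
/- Let U, V ⊆ ℝⁿ be open sets and let φ : U → V be a Q-quasiisometrical homeomorphism with Q ≥ 1. Then: (1) for every nonnegative measurable function g on V one has ∫_U g(φ(x)) dx ≤ Qⁿ ∫_V g(y) dy; (2) if v : V → ℝ is differentiable at φ(x) and φ is differentiable at x, then v ∘ φ is differentiable at x and ‖∇(v ∘ φ)(x)‖ ≤ Q ‖∇v(φ(x))‖. Consequently, for every continuously differentiable v : V → ℝ, the composition u = v ∘ φ, which is differentiable at almost every point of U, satisfies ∫_U (|u|² + ‖∇u‖²) dx ≤ Q^{n+2} ∫_V (|v|² + ‖∇v‖²) dy; i.e., φ induces a bounded composition operator φ*(v) = v ∘ φ from H¹(V) to H¹(U) on continuously differentiable functions. -/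
open MeasureTheory

lemma qi_cover {n : ℕ} {Q : ℝ} {U : Set (EuclideanSpace ℝ (Fin n))}
    {φ : EuclideanSpace ℝ (Fin n) → EuclideanSpace ℝ (Fin n)} (h : QIEstimateOn Q U φ) :
    ∃ B : ℕ → Set (EuclideanSpace ℝ (Fin n)), (∀ i, IsOpen (B i) ∧ B i ⊆ U ∧
      ∀ y ∈ B i, ∀ z ∈ B i,
        Q⁻¹ * ‖y - z‖ ≤ ‖φ y - φ z‖ ∧ ‖φ y - φ z‖ ≤ Q * ‖y - z‖) ∧ U = ⋃ i, B i := by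
  classical
  rcases U.eq_empty_or_nonempty with rfl | hne
  · exact ⟨fun _ => ∅, by simp, by simp⟩
  choose! r hr hsub hest using h
  obtain ⟨t, htU, htc, hcov⟩ := TopologicalSpace.countable_cover_nhdsWithin
    (f := fun x => Metric.ball x (r x)) (s := U)
    (fun x hx => mem_nhdsWithin_of_mem_nhds (Metric.ball_mem_nhds x (hr x hx)))
  have htne : t.Nonempty := by
    by_contra hcon
    rw [Set.not_nonempty_iff_eq_empty] at hcon
    subst hcon
    obtain ⟨x, hx⟩ := hne
    simpa using hcov hx
  obtain ⟨f, rfl⟩ := htc.exists_eq_range htne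
  have hf : ∀ i, f i ∈ U := fun i => htU ⟨i, rfl⟩
  refine ⟨fun i => Metric.ball (f i) (r (f i)), fun i =>
    ⟨Metric.isOpen_ball, hsub _ (hf i), hest _ (hf i)⟩, ?_⟩
  apply Set.Subset.antisymm
  · simpa using hcov
  · exact Set.iUnion_subset fun i => hsub _ (hf i)

lemma volume_image_le_of_lip {n : ℕ} {Q : ℝ} (hQ : 0 ≤ Q)
    {g : EuclideanSpace ℝ (Fin n) → EuclideanSpace ℝ (Fin n)}
    {A : Set (EuclideanSpace ℝ (Fin n))}
    (hg : ∀ y ∈ A, ∀ z ∈ A, ‖g y - g z‖ ≤ Q * ‖y - z‖) :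
    volume (g '' A) ≤ ENNReal.ofReal (Q ^ n) * volume A := by
  have hL : LipschitzOnWith Q.toNNReal g A := by
    refine LipschitzOnWith.of_dist_le_mul fun y hy z hz => ?_
    rw [dist_eq_norm, dist_eq_norm, Real.coe_toNNReal _ hQ]
    exact hg y hy z hz
  have h1 := hL.hausdorffMeasure_image_le (d := (n : ℝ)) (by positivity)
  have hfin : Module.finrank ℝ (EuclideanSpace ℝ (Fin n)) = n := by simp
  have hh : (Measure.hausdorffMeasure (n : ℝ) :
      Measure (EuclideanSpace ℝ (Fin n))).IsAddHaarMeasure := by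
    have := MeasureTheory.isAddHaarMeasure_hausdorffMeasure (E := EuclideanSpace ℝ (Fin n))
    rwa [hfin] at this
  have hv := Measure.isAddLeftInvariant_eq_smul (volume : Measure (EuclideanSpace ℝ (Fin n)))
    (Measure.hausdorffMeasure (n : ℝ))
  generalize Measure.addHaarScalarFactor (volume : Measure (EuclideanSpace ℝ (Fin n)))
    (Measure.hausdorffMeasure (n : ℝ)) = c at hv
  rw [hv]
  simp only [Measure.smul_apply, ENNReal.smul_def, smul_eq_mul]
  have h2 : ((Q.toNNReal : ENNReal) ^ (n : ℝ)) = ENNReal.ofReal (Q ^ n) := by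
    rw [ENNReal.rpow_natCast, ENNReal.ofReal_pow hQ]; rfl
  rw [h2] at h1
  calc _ ≤ c * (ENNReal.ofReal (Q ^ n) * Measure.hausdorffMeasure (n : ℝ) A) := by gcongr
    _ = _ := by ring

lemma qi_volume_le {n : ℕ} {Q : ℝ} (hQ : 1 ≤ Q) {U V : Set (EuclideanSpace ℝ (Fin n))}
    {φ : EuclideanSpace ℝ (Fin n) → EuclideanSpace ℝ (Fin n)}
    (hφ : IsQuasiIsometricHomeo Q U V φ) {A : Set (EuclideanSpace ℝ (Fin n))}
    (hA : MeasurableSet A) (hAU : A ⊆ U) :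
    volume A ≤ ENNReal.ofReal (Q ^ n) * volume (φ '' A) := by
  obtain ⟨hbij, hcont, -, hest⟩ := hφ
  have hQ0 : 0 < Q := by linarith
  obtain ⟨B, hB, hU⟩ := qi_cover hest
  let C : ℕ → Set (EuclideanSpace ℝ (Fin n)) := fun i => A ∩ disjointed B i
  have hCB : ∀ i, C i ⊆ B i := fun i => Set.inter_subset_right.trans (disjointed_subset B i)
  have hCA : ∀ i, C i ⊆ A := fun i => Set.inter_subset_left
  have hCm : ∀ i, MeasurableSet (C i) := fun i =>
    hA.inter (MeasurableSet.disjointed (fun j => (hB j).1.measurableSet) i)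
  have hAC : A = ⋃ i, C i := by
    rw [← Set.inter_iUnion, iUnion_disjointed, ← hU, Set.inter_eq_left.2 hAU]
  have hdis : Pairwise (Function.onFun Disjoint C) := fun i j hij =>
    (disjoint_disjointed B hij).mono Set.inter_subset_right Set.inter_subset_right
  have hinj := hbij.injOn
  have hdis' : Pairwise (Function.onFun Disjoint (fun i => φ '' C i)) := by
    intro i j hij
    refine Set.disjoint_left.2 ?_
    rintro _ ⟨y, hy, rfl⟩ ⟨z, hz, hyz⟩
    have := hinj (hAU (hCA j hz)) (hAU (hCA i hy)) hyz
    subst this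
    exact Set.disjoint_left.1 (hdis hij) hy hz
  have himm : ∀ i, MeasurableSet (φ '' C i) := fun i =>
    (hCm i).image_of_continuousOn_injOn (hcont.mono ((hCA i).trans hAU))
      (hinj.mono ((hCA i).trans hAU))
  have hloc : ∀ i, volume (C i) ≤ ENNReal.ofReal (Q ^ n) * volume (φ '' C i) := by
    intro i
    have key := volume_image_le_of_lip (Q := Q) hQ0.le (g := Function.invFunOn φ U)
      (A := φ '' C i) ?_
    · have him : Function.invFunOn φ U '' (φ '' C i) = C i :=
        hinj.leftInvOn_invFunOn.image_image' ((hCA i).trans hAU)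
      rwa [him] at key
    · rintro _ ⟨y, hy, rfl⟩ _ ⟨z, hz, rfl⟩
      rw [hinj.leftInvOn_invFunOn (hAU (hCA i hy)), hinj.leftInvOn_invFunOn (hAU (hCA i hz))]
      have := ((hB i).2.2 y (hCB i hy) z (hCB i hz)).1
      rwa [inv_mul_le_iff₀ hQ0] at this
  calc volume A = ∑' i, volume (C i) := by
        conv_lhs => rw [hAC]
        exact measure_iUnion hdis hCm
    _ ≤ ∑' i, ENNReal.ofReal (Q ^ n) * volume (φ '' C i) := ENNReal.tsum_le_tsum hloc
    _ = ENNReal.ofReal (Q ^ n) * volume (⋃ i, φ '' C i) := by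
        rw [ENNReal.tsum_mul_left, measure_iUnion hdis' himm]
    _ = _ := by rw [← Set.image_iUnion, ← hAC]

lemma qi_lintegral_le {n : ℕ} {Q : ℝ} (hQ : 1 ≤ Q) {U V : Set (EuclideanSpace ℝ (Fin n))}
    (hUo : IsOpen U)
    {φ : EuclideanSpace ℝ (Fin n) → EuclideanSpace ℝ (Fin n)}
    (hφ : IsQuasiIsometricHomeo Q U V φ) (g : EuclideanSpace ℝ (Fin n) → ENNReal)
    (hg : Measurable g) :
    (∫⁻ x in U, g (φ x)) ≤ ENNReal.ofReal (Q ^ n) * ∫⁻ y in V, g y := by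
  have hm : AEMeasurable φ (volume.restrict U) := hφ.2.1.aemeasurable hUo.measurableSet
  have hle : Measure.map φ (volume.restrict U) ≤
      ENNReal.ofReal (Q ^ n) • volume.restrict V := by
    refine Measure.le_iff.2 fun s hs => ?_
    have hms : MeasurableSet (U ∩ φ ⁻¹' s) := by
      have h1 : MeasurableSet (U.domRestrict φ ⁻¹' s) := hφ.2.1.domRestrict.measurable hs
      have h2 := hUo.measurableSet.subtype_image h1
      rwa [Set.domRestrict_eq, Set.preimage_comp, Subtype.image_preimage_coe] at h2
    rw [Measure.map_apply_of_aemeasurable hm hs, Measure.restrict_apply' hUo.measurableSet,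
      Set.inter_comm, Measure.smul_apply, smul_eq_mul, Measure.restrict_apply hs]
    refine (qi_volume_le hQ hφ hms Set.inter_subset_left).trans ?_
    gcongr
    rintro _ ⟨x, hx, rfl⟩
    exact ⟨hx.2, hφ.1.mapsTo hx.1⟩
  calc (∫⁻ x in U, g (φ x)) = ∫⁻ y, g y ∂(Measure.map φ (volume.restrict U)) :=
        (lintegral_map' hg.aemeasurable hm).symm
    _ ≤ ∫⁻ y, g y ∂(ENNReal.ofReal (Q ^ n) • volume.restrict V) := lintegral_mono' hle le_rfl
    _ = _ := by rw [lintegral_smul_measure, smul_eq_mul]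

lemma norm_gradient_eq {n : ℕ} (v : EuclideanSpace ℝ (Fin n) → ℝ)
    (x : EuclideanSpace ℝ (Fin n)) : ‖gradient v x‖ = ‖fderiv ℝ v x‖ := by
  rw [← toDual_gradient, LinearIsometryEquiv.norm_map]

lemma qi_grad {n : ℕ} {Q : ℝ} (hQ : 1 ≤ Q) {U : Set (EuclideanSpace ℝ (Fin n))}
    {φ : EuclideanSpace ℝ (Fin n) → EuclideanSpace ℝ (Fin n)} (hφ : QIEstimateOn Q U φ)
    (v : EuclideanSpace ℝ (Fin n) → ℝ) (x : EuclideanSpace ℝ (Fin n)) (hx : x ∈ U)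
    (hv : DifferentiableAt ℝ v (φ x)) (hd : DifferentiableAt ℝ φ x) :
    DifferentiableAt ℝ (v ∘ φ) x ∧ ‖gradient (v ∘ φ) x‖ ≤ Q * ‖gradient v (φ x)‖ := by
  refine ⟨hv.comp x hd, ?_⟩
  obtain ⟨r, hr, -, hest⟩ := hφ x hx
  have hb : ‖fderiv ℝ φ x‖ ≤ Q := by
    refine norm_fderiv_le_of_lip' ℝ (by linarith) ?_
    filter_upwards [Metric.ball_mem_nhds x hr] with y hy
    exact (hest y hy x (Metric.mem_ball_self hr)).2
  rw [norm_gradient_eq, norm_gradient_eq, fderiv_comp x hv hd, mul_comm]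
  exact (ContinuousLinearMap.opNorm_comp_le _ _).trans (by gcongr)

lemma qi_ae_diff {n : ℕ} {Q : ℝ} (hQ : 1 ≤ Q) {U : Set (EuclideanSpace ℝ (Fin n))}
    {φ : EuclideanSpace ℝ (Fin n) → EuclideanSpace ℝ (Fin n)} (hφ : QIEstimateOn Q U φ) :
    ∀ᵐ x ∂(volume.restrict U), DifferentiableAt ℝ φ x := by
  obtain ⟨B, hB, hU⟩ := qi_cover hφ
  rw [hU, ae_restrict_iUnion_iff]
  intro i
  have hL : LipschitzOnWith Q.toNNReal φ (B i) := by
    refine LipschitzOnWith.of_dist_le_mul fun y hy z hz => ?_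
    rw [dist_eq_norm, dist_eq_norm, Real.coe_toNNReal _ (by linarith)]
    exact ((hB i).2.2 y hy z hz).2
  filter_upwards [hL.ae_differentiableWithinAt (μ := volume) (hB i).1.measurableSet,
    ae_restrict_mem (hB i).1.measurableSet] with x hx hxB
  exact hx.differentiableAt ((hB i).1.mem_nhds hxB)

/-- a `Q`-quasiisometrical homeomorphism `φ : U → V` (`Q ≥ 1`) between
open sets satisfies: (1) `∫_U g∘φ ≤ Qⁿ ∫_V g` for every nonnegative measurable `g`;
(2) the chain rule bound `‖∇(v∘φ)(x)‖ ≤ Q‖∇v(φ(x))‖` at points of differentiability;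
and consequently (3) for every `C¹` function `v` on `V`, the composition `u = v ∘ φ`
is differentiable a.e. on `U` and `∫_U (|u|² + ‖∇u‖²) ≤ Q^{n+2} ∫_V (|v|² + ‖∇v‖²)`,
i.e. `φ` induces a bounded composition operator from `H¹(V)` to `H¹(U)`. -/
theorem quasiIsometry_composition_operator
    {n : ℕ} (Q : ℝ) (hQ : 1 ≤ Q)
    (U V : Set (EuclideanSpace ℝ (Fin n))) (hUopen : IsOpen U) (hVopen : IsOpen V)
    (φ : EuclideanSpace ℝ (Fin n) → EuclideanSpace ℝ (Fin n))
    (hφ : IsQuasiIsometricHomeo Q U V φ) :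
    (∀ g : EuclideanSpace ℝ (Fin n) → ENNReal, Measurable g →
      (∫⁻ x in U, g (φ x)) ≤ ENNReal.ofReal (Q ^ n) * ∫⁻ y in V, g y) ∧
    (∀ v : EuclideanSpace ℝ (Fin n) → ℝ, ∀ x ∈ U,
      DifferentiableAt ℝ v (φ x) → DifferentiableAt ℝ φ x →
        DifferentiableAt ℝ (v ∘ φ) x ∧
          ‖gradient (v ∘ φ) x‖ ≤ Q * ‖gradient v (φ x)‖) ∧
    (∀ v : EuclideanSpace ℝ (Fin n) → ℝ, ContDiffOn ℝ 1 v V →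
      (∀ᵐ x ∂(volume.restrict U), DifferentiableAt ℝ (v ∘ φ) x) ∧
      (∫⁻ x in U, ENNReal.ofReal ((v (φ x)) ^ 2 + ‖gradient (v ∘ φ) x‖ ^ 2)) ≤
        ENNReal.ofReal (Q ^ (n + 2)) *
          ∫⁻ y in V, ENNReal.ofReal ((v y) ^ 2 + ‖gradient v y‖ ^ 2)) := by
  obtain ⟨hbij, hcont, hinv, hest⟩ := id hφ
  refine ⟨fun g hg => qi_lintegral_le hQ hUopen hφ g hg,
    fun v x hx hv hd => qi_grad hQ hest v x hx hv hd, fun v hv => ?_⟩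
  have hae := qi_ae_diff hQ hest
  have hvd : ∀ y ∈ V, DifferentiableAt ℝ v y := fun y hy =>
    (hv.differentiableOn (by norm_num)).differentiableAt (hVopen.mem_nhds hy)
  have hboth : ∀ᵐ x ∂(volume.restrict U), x ∈ U ∧ DifferentiableAt ℝ (v ∘ φ) x ∧
      ‖gradient (v ∘ φ) x‖ ≤ Q * ‖gradient v (φ x)‖ := by
    filter_upwards [hae, ae_restrict_mem hUopen.measurableSet] with x hx hxU
    exact ⟨hxU, qi_grad hQ hest v x hxU (hvd _ (hbij.mapsTo hxU)) hx⟩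
  refine ⟨hboth.mono fun x hx => hx.2.1, ?_⟩
  set g : EuclideanSpace ℝ (Fin n) → ENNReal :=
    fun y => ENNReal.ofReal ((v y) ^ 2 + ‖gradient v y‖ ^ 2) with hgdef
  have hgc : ContinuousOn g V := by
    have h1 : ContinuousOn (fun y => ‖gradient v y‖) V := by
      simp_rw [norm_gradient_eq]
      exact (hv.continuousOn_fderiv_of_isOpen hVopen le_rfl).norm
    exact ENNReal.continuous_ofReal.comp_continuousOn ((hv.continuousOn.pow 2).add (h1.pow 2))
  have hgm : Measurable (V.indicator g) := by
    classical
    rw [← Set.piecewise_eq_indicator]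
    exact hgc.measurable_piecewise continuousOn_const hVopen.measurableSet
  have hQ0 : 0 ≤ Q := by linarith
  calc (∫⁻ x in U, ENNReal.ofReal ((v (φ x)) ^ 2 + ‖gradient (v ∘ φ) x‖ ^ 2))
      ≤ ∫⁻ x in U, ENNReal.ofReal (Q ^ 2) * V.indicator g (φ x) := by
        refine lintegral_mono_ae ?_
        filter_upwards [hboth] with x hx
        rw [Set.indicator_of_mem (hbij.mapsTo hx.1), hgdef, ← ENNReal.ofReal_mul (by positivity)]
        refine ENNReal.ofReal_le_ofReal ?_
        have h1 : ‖gradient (v ∘ φ) x‖ ^ 2 ≤ (Q * ‖gradient v (φ x)‖) ^ 2 := by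
          gcongr
          exact hx.2.2
        have h2 : v (φ x) ^ 2 ≤ Q ^ 2 * v (φ x) ^ 2 :=
          le_mul_of_one_le_left (sq_nonneg _) (one_le_pow₀ hQ)
        nlinarith
    _ = ENNReal.ofReal (Q ^ 2) * ∫⁻ x in U, V.indicator g (φ x) :=
        lintegral_const_mul' _ _ ENNReal.ofReal_ne_top
    _ ≤ ENNReal.ofReal (Q ^ 2) * (ENNReal.ofReal (Q ^ n) * ∫⁻ y in V, V.indicator g y) := by
        gcongr
        exact qi_lintegral_le hQ hUopen hφ _ hgm
    _ = _ := by
        rw [setLIntegral_congr_fun hVopen.measurableSet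
          (fun y hy => Set.indicator_of_mem hy g), ← mul_assoc,
          ← ENNReal.ofReal_mul (by positivity), ← pow_add, add_comm 2 n]
end
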